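/- Let f : ℝⁿ → ℝⁿ with f(0) = 0 be differentiable at 0 with derivative A, and let G : ℝⁿ → ℝ^{n×m} be continuous at 0 with G(0) = B. Let Q ∈ ℝ^{n×n} and R ∈ ℝ^{m×m} be positive definite, let P ∈ ℝ^{n×n} be a symmetric positive definite matrix satisfying AᵀP + PA − P B R⁻¹ Bᵀ P + Q = 0, set K = R⁻¹BᵀP, V(x) = (1/2)xᵀPx, a(x) = xᵀP f(x), b(x) = xᵀP G(x). Then there exists C > 0 such that the set X_ROA,L = {x ∈ ℝⁿ : x ≠ 0, V(x) ≤ C, a(x) + b(x)(−Kx) < 0} is nonempty, and X_ROA,L is contained in the set X_ROA,S = {x ∈ ℝⁿ : x ≠ 0, V(x) ≤ C, a(x) + b(x)·u_S(x) < 0}, where u_S is the Sontag-type control law. -/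

import Mathlib

open Matrix

/-- The Sontag-type distortion factor
`λ = (a + √(a² + q·(b R⁻¹ bᵀ))) / (b R⁻¹ bᵀ)`, where `q = xᵀQx` is passed in as
a scalar and `b` is a row vector (represented as `Fin m → ℝ`). -/
noncomputable def sontagLambda {m : ℕ} (R : Matrix (Fin m) (Fin m) ℝ)
    (a q : ℝ) (b : Fin m → ℝ) : ℝ :=
  (a + Real.sqrt (a ^ 2 + q * (b ⬝ᵥ R⁻¹ *ᵥ b))) / (b ⬝ᵥ R⁻¹ *ᵥ b)

/-- The Sontag-type control law `u_S = −λ R⁻¹ bᵀ` if `b ≠ 0`, and `u_S = 0` if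
`b = 0`. -/
noncomputable def sontagControl {m : ℕ} (R : Matrix (Fin m) (Fin m) ℝ)
    (a q : ℝ) (b : Fin m → ℝ) : Fin m → ℝ :=
  if b = 0 then 0 else -(sontagLambda R a q b) • (R⁻¹ *ᵥ b)

/-!
When `b ≠ 0`, the Sontag-type feedback is built so that the derivative of the Lyapunov function
equals `-√(a² + xᵀQx · b R⁻¹ bᵀ) < 0`; when `b = 0`, no control affects this derivative. So
wherever some control makes the derivative negative, the Sontag-type feedback does too.

That the LQR feedback has such points in every sublevel set of `V` is Lyapunov's indirect method:
the closed-loop field has derivative `A - BK` at `0`, the Riccati equation gives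
`2 xᵀP(A - BK)x = -(xᵀQx + (BᵀPx)ᵀR⁻¹(BᵀPx)) < 0`, and the remainder is `o(‖x‖²)`.
-/

open Filter Topology

section Linearization

variable {E F H : Type*} [NormedAddCommGroup E] [NormedSpace ℝ E]
  [NormedAddCommGroup F] [NormedSpace ℝ F] [NormedAddCommGroup H] [NormedSpace ℝ H]

theorem isCoercive_of_forall_pos [FiniteDimensional ℝ E] {β : E →L[ℝ] E →L[ℝ] ℝ}
    (hβ : ∀ x, x ≠ 0 → 0 < β x x) : IsCoercive β := by
  have hcont : Continuous fun x => β x x := by fun_prop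
  obtain ⟨c, hc, hle⟩ : ∃ c > 0, ∀ x ∈ Metric.sphere (0 : E) 1, c ≤ β x x :=
    (isCompact_sphere 0 1).exists_forall_le' hcont.continuousOn fun x hx =>
      hβ x (ne_zero_of_mem_unit_sphere ⟨x, hx⟩)
  refine ⟨c, hc, fun x => ?_⟩
  obtain rfl | hx := eq_or_ne x 0
  · simp
  have hunit : c ≤ β (‖x‖⁻¹ • x) (‖x‖⁻¹ • x) := hle _ (by simp [norm_smul, hx])
  have hscale : β x x = β (‖x‖⁻¹ • x) (‖x‖⁻¹ • x) * ‖x‖ * ‖x‖ := by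
    simp only [map_smul, _root_.smul_apply, smul_eq_mul]
    field_simp
  rw [hscale]
  gcongr

/-- Because `u` vanishes at `x`, the product rule needs no differentiability of `T`. -/
theorem hasFDerivAt_clm_apply_of_eq_zero {T : E → F →L[ℝ] H} {u : E → F} {u' : E →L[ℝ] F} {x : E}
    (hT : ContinuousAt T x) (hu : HasFDerivAt u u' x) (hux : u x = 0) :
    HasFDerivAt (fun y => T y (u y)) (T x ∘L u') x := by
  have hTo : (fun y => T y - T x) =o[𝓝 x] fun _ => (1 : ℝ) :=
    (Asymptotics.isLittleO_one_iff ℝ).2 (tendsto_sub_nhds_zero_iff.2 hT)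
  have huO : u =O[𝓝 x] fun y => y - x := by simpa [hux] using hu.isBigO_sub
  have hsmall : (fun y => (T y - T x) (u y)) =o[𝓝 x] fun y => y - x := by
    refine (Asymptotics.IsBigO.of_norm_le fun y => (T y - T x).le_opNorm (u y)).trans_isLittleO ?_
    simpa using hTo.norm_left.mul_isBigO huO.norm_norm
  have hconst : HasFDerivAt (fun y => T x (u y)) (T x ∘L u') x := (T x).hasFDerivAt.comp x hu
  refine .of_isLittleO ((hsmall.add hconst.isLittleO).congr_left fun y => ?_)
  simp [hux]

theorem eventually_clm_apply_neg_of_hasFDerivAt [FiniteDimensional ℝ E] {β : E →L[ℝ] F →L[ℝ] ℝ}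
    {g : E → F} {g' : E →L[ℝ] F} (hg : HasFDerivAt g g' 0) (hg0 : g 0 = 0)
    (hneg : ∀ x, x ≠ 0 → β x (g' x) < 0) : ∀ᶠ x in 𝓝[≠] 0, β x (g x) < 0 := by
  obtain ⟨c, hc, hcoercive⟩ : IsCoercive (-(β.bilinearComp (.id ℝ E) g')) :=
    isCoercive_of_forall_pos fun x hx => by simpa using hneg x hx
  have hrem : (fun x => β x (g x - g' x)) =o[𝓝 0] fun x => ‖x‖ * ‖x‖ := by
    have hgo : (fun x => g x - g' x) =o[𝓝 0] fun x => x := by simpa [hg0] using hg.isLittleO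
    refine (Asymptotics.IsBigO.of_bound ‖β‖ (.of_forall fun x => ?_)).trans_isLittleO
      ((Asymptotics.isBigO_refl (fun x : E => ‖x‖) _).mul_isLittleO hgo.norm_norm)
    simpa [mul_assoc] using β.le_opNorm₂ x (g x - g' x)
  filter_upwards [nhdsWithin_le_nhds (hrem.bound (half_pos hc)), self_mem_nhdsWithin]
    with x hx hx0
  have hpos : 0 < ‖x‖ * ‖x‖ := mul_self_pos.2 (norm_ne_zero_iff.2 hx0)
  have hlin : c * ‖x‖ * ‖x‖ ≤ -β x (g' x) := by simpa using hcoercive x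
  have hdiff : β x (g x) - β x (g' x) ≤ c / 2 * (‖x‖ * ‖x‖) := by
    simpa using (le_abs_self _).trans hx
  nlinarith

end Linearization

section Riccati

variable {ι κ : Type*} [Fintype ι] [Fintype κ]

theorem two_mul_dotProduct_closedLoop_of_riccati {α : Type*} [CommRing α] {A P Q : Matrix ι ι α}
    {B : Matrix ι κ α} {S : Matrix κ κ α} (hP : P.IsSymm)
    (hRic : Aᵀ * P + P * A - P * B * S * Bᵀ * P + Q = 0) (x : ι → α) :
    2 * (x ⬝ᵥ P *ᵥ ((A - B * (S * Bᵀ * P)) *ᵥ x)) =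
      -(x ⬝ᵥ Q *ᵥ x + (Bᵀ * P) *ᵥ x ⬝ᵥ S *ᵥ ((Bᵀ * P) *ᵥ x)) := by
  have hA : x ⬝ᵥ (Aᵀ * P) *ᵥ x = x ⬝ᵥ (P * A) *ᵥ x := by
    rw [dotProduct_mulVec, ← mulVec_transpose, transpose_mul, transpose_transpose, hP,
      dotProduct_comm]
  have hS : (Bᵀ * P) *ᵥ x ⬝ᵥ S *ᵥ ((Bᵀ * P) *ᵥ x) = x ⬝ᵥ (P * B * S * Bᵀ * P) *ᵥ x := by
    have hBP : (Bᵀ * P) *ᵥ x = x ᵥ* (P * B) := by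
      rw [← vecMul_transpose, transpose_mul, transpose_transpose, hP]
    nth_rw 1 [hBP]
    rw [← dotProduct_mulVec]
    simp only [mulVec_mulVec, Matrix.mul_assoc]
  have hquad : x ⬝ᵥ (Aᵀ * P + P * A - P * B * S * Bᵀ * P + Q) *ᵥ x = 0 := by simp [hRic]
  simp only [add_mulVec, sub_mulVec, dotProduct_add, dotProduct_sub, hA] at hquad
  have hsplit : x ⬝ᵥ P *ᵥ ((A - B * (S * Bᵀ * P)) *ᵥ x) =
      x ⬝ᵥ (P * A) *ᵥ x - x ⬝ᵥ (P * B * S * Bᵀ * P) *ᵥ x := by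
    simp only [sub_mulVec, mulVec_sub, dotProduct_sub, mulVec_mulVec, Matrix.mul_assoc]
  rw [hsplit, hS]
  linear_combination hquad

theorem dotProduct_closedLoop_neg_of_riccati {A P Q : Matrix ι ι ℝ} {B : Matrix ι κ ℝ}
    {S : Matrix κ κ ℝ} (hQ : Q.PosDef) (hS : S.PosSemidef) (hP : P.IsSymm)
    (hRic : Aᵀ * P + P * A - P * B * S * Bᵀ * P + Q = 0) {x : ι → ℝ} (hx : x ≠ 0) :
    x ⬝ᵥ P *ᵥ ((A - B * (S * Bᵀ * P)) *ᵥ x) < 0 := by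
  have hQx : 0 < x ⬝ᵥ Q *ᵥ x := hQ.dotProduct_mulVec_pos hx
  have hSx : 0 ≤ (Bᵀ * P) *ᵥ x ⬝ᵥ S *ᵥ ((Bᵀ * P) *ᵥ x) := hS.dotProduct_mulVec_nonneg _
  linarith [two_mul_dotProduct_closedLoop_of_riccati hP hRic x]

end Riccati

section LinearFeedback

variable {ι κ : Type*} [Fintype ι] [Fintype κ] {f : (ι → ℝ) → ι → ℝ}
  {G : (ι → ℝ) → Matrix ι κ ℝ} {A : Matrix ι ι ℝ}

theorem hasFDerivAt_closedLoop_zero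
    (hf : HasFDerivAt f (LinearMap.toContinuousLinearMap A.mulVecLin) 0)
    (hG : ContinuousAt G 0) (K : Matrix κ ι ℝ) :
    HasFDerivAt (fun x => f x - G x *ᵥ (K *ᵥ x))
      (LinearMap.toContinuousLinearMap (A - G 0 * K).mulVecLin) 0 := by
  classical
  let Φ : Matrix ι κ ℝ →ₗ[ℝ] (κ → ℝ) →L[ℝ] ι → ℝ :=
    LinearMap.toContinuousLinearMap.toLinearMap ∘ₗ Matrix.toLin'.toLinearMap
  have hT : ContinuousAt (fun x => Φ (G x)) 0 :=
    Φ.continuous_of_finiteDimensional.continuousAt.comp hG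
  have hK : HasFDerivAt (fun x => K *ᵥ x) (LinearMap.toContinuousLinearMap K.mulVecLin) 0 :=
    (LinearMap.toContinuousLinearMap K.mulVecLin).hasFDerivAt
  refine (hf.sub (hasFDerivAt_clm_apply_of_eq_zero hT hK (mulVec_zero K))).congr_fderiv ?_
  ext1 x
  simp [Φ]

theorem eventually_lyapunovDeriv_neg_of_linearization {P : Matrix ι ι ℝ} {K : Matrix κ ι ℝ}
    (hf0 : f 0 = 0) (hf : HasFDerivAt f (LinearMap.toContinuousLinearMap A.mulVecLin) 0)
    (hG : ContinuousAt G 0) (hneg : ∀ x, x ≠ 0 → x ⬝ᵥ P *ᵥ ((A - G 0 * K) *ᵥ x) < 0) :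
    ∀ᶠ x in 𝓝[≠] 0, x ⬝ᵥ P *ᵥ f x + (x ᵥ* (P * G x)) ⬝ᵥ (-(K *ᵥ x)) < 0 := by
  classical
  let form : (ι → ℝ) →ₗ[ℝ] (ι → ℝ) →ₗ[ℝ] ℝ := Matrix.toLinearMap₂' ℝ P
  let β := form.toContinuousBilinearMap
  have hβ (x y : ι → ℝ) : β x y = x ⬝ᵥ P *ᵥ y := toLinearMap₂'_apply' P x y
  have hev := eventually_clm_apply_neg_of_hasFDerivAt (β := β)
    (hasFDerivAt_closedLoop_zero hf hG K) (by simp [hf0]) fun x hx => (hβ _ _).trans_lt (hneg x hx)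
  filter_upwards [hev] with x hx
  rwa [hβ, mulVec_sub, dotProduct_sub, mulVec_mulVec, dotProduct_mulVec x (P * G x),
    sub_eq_add_neg, ← dotProduct_neg] at hx

end LinearFeedback

section Sontag

variable {m : ℕ} {R : Matrix (Fin m) (Fin m) ℝ}

theorem add_dotProduct_sontagControl (hR : R.PosDef) (a q : ℝ) {b : Fin m → ℝ} (hb : b ≠ 0) :
    a + b ⬝ᵥ sontagControl R a q b = -√(a ^ 2 + q * (b ⬝ᵥ R⁻¹ *ᵥ b)) := by
  have hbR : b ⬝ᵥ R⁻¹ *ᵥ b ≠ 0 := (hR.inv.dotProduct_mulVec_pos hb).ne'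
  rw [sontagControl, if_neg hb, dotProduct_smul, sontagLambda, smul_eq_mul, neg_mul,
    div_mul_cancel₀ _ hbR]
  ring

theorem add_dotProduct_sontagControl_neg (hR : R.PosDef) {a q : ℝ} {b u : Fin m → ℝ} (hq : 0 < q)
    (hu : a + b ⬝ᵥ u < 0) : a + b ⬝ᵥ sontagControl R a q b < 0 := by
  obtain rfl | hb := eq_or_ne b 0
  · simpa using hu
  · have hbR : 0 < b ⬝ᵥ R⁻¹ *ᵥ b := hR.inv.dotProduct_mulVec_pos hb
    rw [add_dotProduct_sontagControl hR a q hb, neg_lt_zero]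
    positivity

end Sontag

theorem stmt_10_general {ι : Type*} [Fintype ι] [Nonempty ι] {m : ℕ}
    {f : (ι → ℝ) → ι → ℝ} {G : (ι → ℝ) → Matrix ι (Fin m) ℝ}
    {A P Q : Matrix ι ι ℝ} {B : Matrix ι (Fin m) ℝ} {R : Matrix (Fin m) (Fin m) ℝ}
    (hf0 : f 0 = 0) (hfA : HasFDerivAt f (LinearMap.toContinuousLinearMap A.mulVecLin) 0)
    (hGcont : ContinuousAt G 0) (hG0 : G 0 = B) (hQ : Q.PosDef) (hR : R.PosDef) (hP : P.IsSymm)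
    (hRic : Aᵀ * P + P * A - P * B * R⁻¹ * Bᵀ * P + Q = 0)
    {K : Matrix (Fin m) ι ℝ} (hK : K = R⁻¹ * Bᵀ * P)
    {V : (ι → ℝ) → ℝ} (hV : ∀ x, V x = (1 / 2) * (x ⬝ᵥ P *ᵥ x))
    {a : (ι → ℝ) → ℝ} (ha : ∀ x, a x = x ⬝ᵥ P *ᵥ f x)
    {b : (ι → ℝ) → Fin m → ℝ} (hb : ∀ x, b x = x ᵥ* (P * G x)) {C : ℝ} (hC : 0 < C) :
    {x : ι → ℝ | x ≠ 0 ∧ V x ≤ C ∧ a x + b x ⬝ᵥ (-(K *ᵥ x)) < 0}.Nonempty ∧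
      {x : ι → ℝ | x ≠ 0 ∧ V x ≤ C ∧ a x + b x ⬝ᵥ (-(K *ᵥ x)) < 0} ⊆
        {x : ι → ℝ | x ≠ 0 ∧ V x ≤ C ∧
          a x + b x ⬝ᵥ sontagControl R (a x) (x ⬝ᵥ Q *ᵥ x) (b x) < 0} := by
  subst hG0 hK
  refine ⟨?_, fun x ⟨hx, hVx, hLx⟩ => ⟨hx, hVx,
    add_dotProduct_sontagControl_neg hR (hQ.dotProduct_mulVec_pos hx) hLx⟩⟩
  have hdecrease := eventually_lyapunovDeriv_neg_of_linearization hf0 hfA hGcont fun _ hx =>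
    dotProduct_closedLoop_neg_of_riccati hQ hR.inv.posSemidef hP hRic hx
  have hsublevel : ∀ᶠ x in 𝓝 0, V x < C := by
    have hVcont : Continuous V := by
      rw [funext hV]
      fun_prop
    exact hVcont.continuousAt.eventually_lt_const (by simpa [hV] using hC)
  have hne : (𝓝[≠] (0 : ι → ℝ)).NeBot := Module.punctured_nhds_neBot ℝ _ _
  obtain ⟨x, ⟨hLx, hVx⟩, hx⟩ :=
    ((hdecrease.and (nhdsWithin_le_nhds hsublevel)).and self_mem_nhdsWithin).exists
  exact ⟨x, hx, hVx.le, by rwa [ha, hb]⟩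

/-- under the hypotheses of the LQR-based CLF design (with
`V(x) = ½xᵀPx`, `a(x) = xᵀP f(x)`, `b(x) = xᵀP G(x)`, `K = R⁻¹BᵀP`), there
exists `C > 0` such that the set
`X_ROA,L = {x ≠ 0 : V(x) ≤ C, a(x) + b(x)(−Kx) < 0}` is nonempty and contained
in `X_ROA,S = {x ≠ 0 : V(x) ≤ C, a(x) + b(x)·u_S(x) < 0}`, where `u_S` is the
Sontag-type control law. -/
theorem stmt_10 {n m : ℕ} (hn : 0 < n)
    (f : (Fin n → ℝ) → (Fin n → ℝ)) (G : (Fin n → ℝ) → Matrix (Fin n) (Fin m) ℝ)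
    (A : Matrix (Fin n) (Fin n) ℝ) (B : Matrix (Fin n) (Fin m) ℝ)
    (hf0 : f 0 = 0)
    (hfA : HasFDerivAt f (LinearMap.toContinuousLinearMap A.mulVecLin) 0)
    (hGcont : ContinuousAt G 0) (hG0 : G 0 = B)
    (Q : Matrix (Fin n) (Fin n) ℝ) (R : Matrix (Fin m) (Fin m) ℝ)
    (hQ : Q.PosDef) (hR : R.PosDef)
    (P : Matrix (Fin n) (Fin n) ℝ) (hP : P.PosDef) (hPsymm : Pᵀ = P)
    (hRic : Aᵀ * P + P * A - P * B * R⁻¹ * Bᵀ * P + Q = 0)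
    (K : Matrix (Fin m) (Fin n) ℝ) (hK : K = R⁻¹ * Bᵀ * P)
    (V : (Fin n → ℝ) → ℝ) (hV : ∀ x, V x = (1 / 2) * (x ⬝ᵥ P *ᵥ x))
    (a : (Fin n → ℝ) → ℝ) (ha : ∀ x, a x = x ⬝ᵥ P *ᵥ f x)
    (b : (Fin n → ℝ) → (Fin m → ℝ)) (hb : ∀ x, b x = x ᵥ* (P * G x)) :
    ∃ C > 0,
      {x : Fin n → ℝ | x ≠ 0 ∧ V x ≤ C ∧ a x + b x ⬝ᵥ (-(K *ᵥ x)) < 0}.Nonempty ∧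
      {x : Fin n → ℝ | x ≠ 0 ∧ V x ≤ C ∧ a x + b x ⬝ᵥ (-(K *ᵥ x)) < 0} ⊆
        {x : Fin n → ℝ | x ≠ 0 ∧ V x ≤ C ∧
          a x + b x ⬝ᵥ sontagControl R (a x) (x ⬝ᵥ Q *ᵥ x) (b x) < 0} := by
  have : Nonempty (Fin n) := ⟨⟨0, hn⟩⟩
  exact ⟨1, one_pos, stmt_10_general hf0 hfA hGcont hG0 hQ hR hPsymm hRic hK hV ha hb one_pos⟩
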